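/- Let 0 < α < 1 and μ ∈ ℝ, and define F_{α,δ}(z) = ∑_{j=0}^∞ (j+1) z^j / Γ(α j + δ) for δ > 0. Then for every t > 0: (i) the function φ(t) = t^α F_{α,α+1}(-μ t^α) satisfies (D^α φ)(t) + μ φ(t) = E_{α,1}(-μ t^α); (ii) the function ψ(t) = t^{2α} F_{α,2α+1}(-μ t^α) satisfies (D^α ψ)(t) + μ ψ(t) = t^α E_{α,α+1}(-μ t^α). -/

import Mathlib

/-!
The Caputo derivative acts on powers by `D^α t^p = Γ(p+1) / Γ(p+1-α) t^(p-α)` (a beta integral), so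
termwise application to `t^β F_{α,β+1}(c t^α) = ∑ (j+1) c^j t^(αj+β) / Γ(αj+β+1)` merely lowers `β`
by `α`. Splitting `j + 1` as `1 + j` and shifting the index in the second part gives
`F_{α,δ}(z) = E_{α,δ}(z) + z F_{α,α+δ}(z)`; for `δ = β - α + 1` and `z = c t^α` the last term,
multiplied by `t^(β-α)`, is `c` times the original function. The series converge because `log Γ` is
convex, which makes `Γ(y+α) / Γ(y)` grow at least like `(y-1)^α`.
-/

open MeasureTheory

/-- The two-parameter Mittag-Leffler function `E_{a,b}(z) = ∑_{k=0}^∞ z^k / Γ(a k + b)`. -/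
noncomputable def mittagLeffler (a b z : ℝ) : ℝ := ∑' k : ℕ, z ^ k / Real.Gamma (a * k + b)

/-- The series `F_{α,δ}(z) = ∑_{j=0}^∞ (j+1) z^j / Γ(α j + δ)`. -/
noncomputable def mlF (α δ z : ℝ) : ℝ := ∑' j : ℕ, (j + 1) * z ^ j / Real.Gamma (α * j + δ)

open Filter Set

section Gamma

lemma sub_one_rpow_mul_Gamma_le_Gamma_add {a y : ℝ} (ha : 0 < a) (hy : 1 < y) :
    (y - 1) ^ a * Real.Gamma y ≤ Real.Gamma (y + a) := by
  have hy₁ : 0 < y - 1 := sub_pos.2 hy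
  have hΓ₁ : 0 < Real.Gamma (y - 1) := Real.Gamma_pos_of_pos hy₁
  have hΓ : 0 < Real.Gamma y := Real.Gamma_pos_of_pos (by linarith)
  have hΓa : 0 < Real.Gamma (y + a) := Real.Gamma_pos_of_pos (by linarith)
  have log_rec : Real.log (Real.Gamma y) - Real.log (Real.Gamma (y - 1)) = Real.log (y - 1) := by
    have h := Real.Gamma_add_one hy₁.ne'
    rw [sub_add_cancel] at h
    rw [h, Real.log_mul hy₁.ne' hΓ₁.ne', add_sub_cancel_right]
  have slope_le := Real.convexOn_log_Gamma.slope_mono_adjacent (mem_Ioi.2 hy₁)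
    (mem_Ioi.2 (by linarith : 0 < y + a)) (sub_one_lt y) (lt_add_of_pos_right y ha)
  simp only [Function.comp_apply, log_rec, sub_sub_cancel, div_one, add_sub_cancel_left,
    le_div_iff₀ ha] at slope_le
  rw [← Real.log_le_log_iff (by positivity) hΓa, Real.log_mul (by positivity) hΓ.ne',
    Real.log_rpow hy₁]
  linarith

lemma eventually_mul_Gamma_le_Gamma_add {a : ℝ} (ha : 0 < a) (C : ℝ) :
    ∀ᶠ y in atTop, C * Real.Gamma y ≤ Real.Gamma (y + a) := by
  have hpow : Tendsto (fun y : ℝ => (y - 1) ^ a) atTop atTop :=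
    (tendsto_rpow_atTop ha).comp (tendsto_atTop_add_const_right _ _ tendsto_id)
  filter_upwards [hpow.eventually_ge_atTop C, eventually_gt_atTop 1] with y hC hy
  have hΓ : 0 < Real.Gamma y := Real.Gamma_pos_of_pos (by linarith)
  exact (mul_le_mul_of_nonneg_right hC hΓ.le).trans (sub_one_rpow_mul_Gamma_le_Gamma_add ha hy)

lemma integral_rpow_mul_sub_rpow {u v a : ℝ} (hu : 0 < u) (hv : 0 < v) (ha : 0 < a) :
    ∫ x in (0 : ℝ)..a, x ^ (u - 1) * (a - x) ^ (v - 1) =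
      a ^ (u + v - 1) * (Real.Gamma u * Real.Gamma v / Real.Gamma (u + v)) := by
  have hcomplex := Complex.betaIntegral_scaled (u : ℂ) (v : ℂ) ha
  rw [Complex.betaIntegral_eq_Gamma_mul_div _ _ (by simpa) (by simpa)] at hcomplex
  apply Complex.ofReal_injective
  rw [← intervalIntegral.integral_ofReal]
  push_cast [Complex.ofReal_cpow ha.le, ← Complex.Gamma_ofReal]
  rw [← hcomplex]
  refine intervalIntegral.integral_congr fun x hx => ?_
  rw [uIcc_of_le ha.le] at hx
  push_cast [Complex.ofReal_cpow hx.1, Complex.ofReal_cpow (sub_nonneg.2 hx.2)]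
  rfl

lemma intervalIntegrable_rpow_mul_sub_rpow {u v a : ℝ} (hu : 0 < u) (hv : 0 < v) (ha : 0 < a) :
    IntervalIntegrable (fun x : ℝ => x ^ (u - 1) * (a - x) ^ (v - 1)) volume 0 a := by
  -- A nonintegrable function would have integral `0`, whereas the beta integral is positive.
  apply intervalIntegral.intervalIntegrable_of_integral_ne_zero
  rw [integral_rpow_mul_sub_rpow hu hv ha]
  exact (mul_pos (Real.rpow_pos_of_pos ha _) (div_pos
    (mul_pos (Real.Gamma_pos_of_pos hu) (Real.Gamma_pos_of_pos hv))
    (Real.Gamma_pos_of_pos (add_pos hu hv)))).ne'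

end Gamma

section MittagLeffler

variable {α : ℝ}

lemma summable_mittagLeffler (hα : 0 < α) (δ z : ℝ) :
    Summable fun k : ℕ => z ^ k / Real.Gamma (α * k + δ) := by
  have harg : Tendsto (fun k : ℕ => α * k + δ) atTop atTop :=
    tendsto_atTop_add_const_right _ _ (tendsto_natCast_atTop_atTop.const_mul_atTop hα)
  refine summable_of_ratio_norm_eventually_le (r := 1 / 2) (by norm_num) ?_
  filter_upwards [harg.eventually_gt_atTop 0,
    harg.eventually (eventually_mul_Gamma_le_Gamma_add hα (2 * |z|))] with k hpos hgrowth
  have hΓ : 0 < Real.Gamma (α * k + δ) := Real.Gamma_pos_of_pos hpos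
  have hΓ' : 0 < Real.Gamma (α * k + δ + α) := Real.Gamma_pos_of_pos (by linarith)
  rw [show α * ((k + 1 : ℕ) : ℝ) + δ = α * k + δ + α by push_cast; ring]
  simp only [norm_div, norm_pow, Real.norm_eq_abs, abs_of_pos hΓ, abs_of_pos hΓ']
  rw [← mul_div_assoc, div_le_div_iff₀ hΓ' hΓ]
  calc |z| ^ (k + 1) * Real.Gamma (α * k + δ)
      = 1 / 2 * |z| ^ k * (2 * |z| * Real.Gamma (α * k + δ)) := by ring
    _ ≤ 1 / 2 * |z| ^ k * Real.Gamma (α * k + δ + α) := by gcongr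

lemma summable_mlF (hα : 0 < α) (δ z : ℝ) :
    Summable fun j : ℕ => (j + 1) * z ^ j / Real.Gamma (α * j + δ) := by
  refine (summable_mittagLeffler hα δ (2 * z)).abs.of_norm_bounded fun j => ?_
  have hj : (j + 1 : ℝ) ≤ 2 ^ j := mod_cast Nat.lt_two_pow_self (n := j)
  simp only [Real.norm_eq_abs, abs_div, abs_mul, mul_pow, abs_pow, Nat.abs_ofNat,
    abs_of_pos (Nat.cast_add_one_pos j : (0 : ℝ) < j + 1)]
  gcongr

lemma mlF_eq_mittagLeffler_add (hα : 0 < α) (δ z : ℝ) :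
    mlF α δ z = mittagLeffler α δ z + z * mlF α (α + δ) z := by
  have hshift : HasSum (fun j : ℕ => j * z ^ j / Real.Gamma (α * j + δ))
      (z * mlF α (α + δ) z) := by
    rw [← hasSum_nat_add_iff' 1]
    convert! (summable_mlF hα (α + δ) z).hasSum.mul_left z using 1
    · ext j
      push_cast
      ring_nf
    · simp [mlF]
  rw [mlF, mittagLeffler, ← hshift.tsum_eq,
    ← (summable_mittagLeffler hα δ z).tsum_add hshift.summable]
  exact tsum_congr fun j => by ring

lemma mlF_term_mul_rpow {t : ℝ} (ht : 0 < t) (α β δ c : ℝ) (j : ℕ) :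
    (j + 1) * c ^ j / Real.Gamma (α * j + δ) * t ^ (α * j + β) =
      t ^ β * ((j + 1) * (c * t ^ α) ^ j / Real.Gamma (α * j + δ)) := by
  rw [Real.rpow_add ht, Real.rpow_mul ht.le, Real.rpow_natCast]
  ring

lemma rpow_mul_mlF_eq_tsum {t : ℝ} (ht : 0 < t) (α β δ c : ℝ) :
    t ^ β * mlF α δ (c * t ^ α) =
      ∑' j : ℕ, (j + 1) * c ^ j / Real.Gamma (α * j + δ) * t ^ (α * j + β) := by
  simp only [mlF_term_mul_rpow ht, tsum_mul_left, mlF]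

lemma summable_mlF_mul_rpow {t : ℝ} (hα : 0 < α) (ht : 0 < t) (β δ c : ℝ) :
    Summable fun j : ℕ => (j + 1) * c ^ j / Real.Gamma (α * j + δ) * t ^ (α * j + β) := by
  simp only [mlF_term_mul_rpow ht]
  exact (summable_mlF hα δ _).mul_left _

end MittagLeffler

section FractionalPowerSeries

variable {ι : Type*} {a p : ι → ℝ} {s t : ℝ}

lemma norm_mul_rpow_le_of_le (ht : 0 ≤ t) (hts : t ≤ s) {q : ℝ} (hq : 0 ≤ q) (b : ℝ) :
    ‖b * t ^ q‖ ≤ ‖b * s ^ q‖ := by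
  rw [norm_mul, norm_mul, Real.norm_of_nonneg (Real.rpow_nonneg ht q),
    Real.norm_of_nonneg (Real.rpow_nonneg (ht.trans hts) q)]
  gcongr

lemma hasDerivAt_tsum_mul_rpow (hp : ∀ i, 0 ≤ p i) (ht : 0 < t) (hts : t < s)
    (hsum : Summable fun i => a i * s ^ p i) (hsum' : Summable fun i => a i * p i * s ^ p i) :
    HasDerivAt (fun x => ∑' i, a i * x ^ p i) (∑' i, a i * (p i * t ^ (p i - 1))) t := by
  have ht_mem : t ∈ Ioo (t / 2) s := ⟨half_lt_self ht, hts⟩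
  have pos_of_mem {x : ℝ} (hx : x ∈ Ioo (t / 2) s) : 0 < x := (half_pos ht).trans hx.1
  refine hasDerivAt_tsum_of_isPreconnected (g := fun i x => a i * x ^ p i)
    (g' := fun i x => a i * (p i * x ^ (p i - 1))) (hsum'.norm.mul_right (t / 2)⁻¹) isOpen_Ioo
    isPreconnected_Ioo (fun i x hx => ?_) (fun i x hx => ?_) ht_mem ?_ ht_mem
  · exact (Real.hasDerivAt_rpow_const (.inl (pos_of_mem hx).ne')).const_mul (a i)
  · have hx0 : 0 < x := pos_of_mem hx
    calc ‖a i * (p i * x ^ (p i - 1))‖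
        = ‖a i * p i * x ^ p i‖ * x⁻¹ := by
          rw [Real.rpow_sub_one hx0.ne', ← mul_assoc, ← mul_div_assoc, norm_div,
            Real.norm_of_nonneg hx0.le, div_eq_mul_inv]
      _ ≤ ‖a i * p i * s ^ p i‖ * (t / 2)⁻¹ := by
          gcongr
          · exact norm_mul_rpow_le_of_le hx0.le hx.2.le (hp i) _
          · exact hx.1.le
  · exact hsum.norm.of_norm_bounded fun i => norm_mul_rpow_le_of_le ht.le hts.le (hp i) _

end FractionalPowerSeries

section Caputo

/-- The Caputo fractional derivative `(D^α f)(t) = Γ(1-α)⁻¹ ∫₀ᵗ f'(z) (t-z)^{-α} dz` with base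
point `0`, meaningful for `0 < α < 1` and `0 < t`. -/
noncomputable def caputoDeriv (α : ℝ) (f : ℝ → ℝ) (t : ℝ) : ℝ :=
  (1 / Real.Gamma (1 - α)) * ∫ z in (0 : ℝ)..t, deriv f z * (t - z) ^ (-α)

variable {α t : ℝ}

lemma caputoDeriv_congr {f g : ℝ → ℝ} (ht : 0 ≤ t) (hfg : EqOn f g (Ioi 0)) :
    caputoDeriv α f t = caputoDeriv α g t := by
  rw [caputoDeriv, caputoDeriv, intervalIntegral.integral_of_le ht,
    intervalIntegral.integral_of_le ht]
  congr 1
  refine setIntegral_congr_fun measurableSet_Ioc fun z hz => ?_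
  simp only [(hfg.eventuallyEq_of_mem (Ioi_mem_nhds hz.1)).deriv_eq]

lemma caputoDeriv_const_mul (c : ℝ) (f : ℝ → ℝ) :
    caputoDeriv α (fun x => c * f x) t = c * caputoDeriv α f t := by
  simp only [caputoDeriv, deriv_const_mul_field', mul_assoc, intervalIntegral.integral_const_mul]
  ring

lemma caputoDeriv_tsum {ι : Type*} [Countable ι] {f : ι → ℝ → ℝ} (ht : 0 ≤ t)
    (hderiv : ∀ z ∈ Ioc 0 t, deriv (fun x => ∑' i, f i x) z = ∑' i, deriv (f i) z)
    (hint : ∀ i, IntegrableOn (fun z => deriv (f i) z * (t - z) ^ (-α)) (Ioc 0 t))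
    (hsum : Summable fun i => ∫ z in Ioc 0 t, ‖deriv (f i) z * (t - z) ^ (-α)‖) :
    caputoDeriv α (fun x => ∑' i, f i x) t = ∑' i, caputoDeriv α (f i) t := by
  simp only [caputoDeriv, intervalIntegral.integral_of_le ht, tsum_mul_left]
  rw [(hasSum_integral_of_summable_integral_norm hint hsum).tsum_eq]
  congr 1
  refine setIntegral_congr_fun measurableSet_Ioc fun z hz => ?_
  simp only [hderiv z hz, tsum_mul_right]

lemma deriv_rpow_mul_sub_rpow (α t p z : ℝ) :
    deriv (fun x : ℝ => x ^ p) z * (t - z) ^ (-α) =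
      p * (z ^ (p - 1) * (t - z) ^ (1 - α - 1)) := by
  rw [Real.deriv_rpow_const, sub_sub_cancel_left, mul_assoc]

lemma integrableOn_deriv_rpow_mul_sub_rpow {p : ℝ} (hα : α < 1) (hp : 0 < p) (ht : 0 < t) :
    IntegrableOn (fun z => deriv (fun x : ℝ => x ^ p) z * (t - z) ^ (-α)) (Ioc 0 t) := by
  simp only [deriv_rpow_mul_sub_rpow]
  exact ((intervalIntegrable_iff_integrableOn_Ioc_of_le ht.le).1
    (intervalIntegrable_rpow_mul_sub_rpow hp (sub_pos.2 hα) ht)).const_mul p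

lemma caputoDeriv_rpow {p : ℝ} (hα : α < 1) (hp : 0 < p) (ht : 0 < t) :
    caputoDeriv α (fun x => x ^ p) t =
      Real.Gamma (p + 1) / Real.Gamma (p + 1 - α) * t ^ (p - α) := by
  have hΓ : Real.Gamma (1 - α) ≠ 0 := (Real.Gamma_pos_of_pos (sub_pos.2 hα)).ne'
  simp only [caputoDeriv, deriv_rpow_mul_sub_rpow, intervalIntegral.integral_const_mul]
  rw [integral_rpow_mul_sub_rpow hp (sub_pos.2 hα) ht, Real.Gamma_add_one hp.ne',
    ← add_sub_assoc, show p + 1 - α - 1 = p - α by ring]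
  field_simp

lemma integral_norm_deriv_mul_rpow {p : ℝ} (hα : α < 1) (hp : 0 < p) (ht : 0 < t) (b : ℝ) :
    ∫ z in Ioc 0 t, ‖deriv (fun x : ℝ => b * x ^ p) z * (t - z) ^ (-α)‖ =
      Real.Gamma (1 - α) * (|b| * caputoDeriv α (fun x => x ^ p) t) := by
  have hΓ : Real.Gamma (1 - α) ≠ 0 := (Real.Gamma_pos_of_pos (sub_pos.2 hα)).ne'
  have hnorm : EqOn (fun z => ‖deriv (fun x : ℝ => b * x ^ p) z * (t - z) ^ (-α)‖)
      (fun z => |b| * (deriv (fun x : ℝ => x ^ p) z * (t - z) ^ (-α))) (Ioc 0 t) := by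
    intro z hz
    have hz0 := hz.1
    have hzt : 0 ≤ t - z := sub_nonneg.2 hz.2
    have hnonneg : 0 ≤ deriv (fun x : ℝ => x ^ p) z * (t - z) ^ (-α) := by
      rw [deriv_rpow_mul_sub_rpow]
      positivity
    simp only [deriv_const_mul_field', mul_assoc, norm_mul b, Real.norm_eq_abs,
      abs_of_nonneg hnonneg]
  rw [setIntegral_congr_fun measurableSet_Ioc hnorm, integral_const_mul, caputoDeriv,
    intervalIntegral.integral_of_le ht.le]
  field_simp

theorem caputoDeriv_tsum_mul_rpow {ι : Type*} [Countable ι] {a p : ι → ℝ} {s : ℝ} (hα : α < 1)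
    (hp : ∀ i, 0 < p i) (ht : 0 < t) (hts : t < s)
    (hsum : Summable fun i => a i * s ^ p i) (hsum' : Summable fun i => a i * p i * s ^ p i)
    (hsumD : Summable fun i =>
      a i * (Real.Gamma (p i + 1) / Real.Gamma (p i + 1 - α) * t ^ (p i - α))) :
    caputoDeriv α (fun x => ∑' i, a i * x ^ p i) t =
      ∑' i, a i * (Real.Gamma (p i + 1) / Real.Gamma (p i + 1 - α) * t ^ (p i - α)) := by
  rw [caputoDeriv_tsum ht.le]
  · simp only [caputoDeriv_const_mul, caputoDeriv_rpow hα (hp _) ht]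
  · intro z hz
    rw [(hasDerivAt_tsum_mul_rpow (fun i => (hp i).le) hz.1 (hz.2.trans_lt hts) hsum hsum').deriv]
    simp only [deriv_const_mul_field', Real.deriv_rpow_const]
  · intro i
    simp only [deriv_const_mul_field', mul_assoc]
    exact (integrableOn_deriv_rpow_mul_sub_rpow hα (hp i) ht).const_mul (a i)
  · simp only [integral_norm_deriv_mul_rpow hα (hp _) ht, caputoDeriv_rpow hα (hp _) ht]
    refine (hsumD.abs.congr fun i => ?_).mul_left _
    have hΓ := Real.Gamma_pos_of_pos (add_pos (hp i) one_pos)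
    have hΓ' := Real.Gamma_pos_of_pos (by linarith [hp i] : 0 < p i + 1 - α)
    rw [abs_mul, abs_of_pos (mul_pos (div_pos hΓ hΓ') (Real.rpow_pos_of_pos ht _))]

end Caputo

section FractionalODE

variable {α β t : ℝ}

lemma caputoDeriv_rpow_mul_mlF (hα0 : 0 < α) (hα1 : α < 1) (hβ : 0 < β) (ht : 0 < t) (c : ℝ) :
    caputoDeriv α (fun s => s ^ β * mlF α (β + 1) (c * s ^ α)) t =
      t ^ (β - α) * mlF α (β - α + 1) (c * t ^ α) := by
  have hp (j : ℕ) : 0 < α * j + β := by positivity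
  have hderiv (j : ℕ) : (j + 1) * c ^ j / Real.Gamma (α * j + (β + 1)) * (α * j + β) =
      (j + 1) * c ^ j / Real.Gamma (α * j + β) := by
    rw [← add_assoc, Real.Gamma_add_one (hp j).ne']
    field_simp [(hp j).ne', (Real.Gamma_pos_of_pos (hp j)).ne']
  have hcaputo (j : ℕ) : (j + 1) * c ^ j / Real.Gamma (α * j + (β + 1)) *
      (Real.Gamma (α * j + β + 1) / Real.Gamma (α * j + β + 1 - α) * t ^ (α * j + β - α)) =
      (j + 1) * c ^ j / Real.Gamma (α * j + (β - α + 1)) * t ^ (α * j + (β - α)) := by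
    rw [← add_assoc, show α * j + β + 1 - α = α * j + (β - α + 1) by ring, add_sub_assoc]
    field_simp [(Real.Gamma_pos_of_pos (add_pos (hp j) one_pos)).ne']
  have hs : 0 < t + 1 := by linarith
  rw [caputoDeriv_congr ht.le fun s hs => rpow_mul_mlF_eq_tsum hs α β (β + 1) c,
    caputoDeriv_tsum_mul_rpow hα1 hp ht (lt_add_one t) (summable_mlF_mul_rpow hα0 hs _ _ _)]
  · simp only [hcaputo, rpow_mul_mlF_eq_tsum ht]
  · simp only [hderiv]
    exact summable_mlF_mul_rpow hα0 hs _ _ _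
  · simp only [hcaputo]
    exact summable_mlF_mul_rpow hα0 ht _ _ _

theorem caputo_ode_for_mlF_general (hα0 : 0 < α) (hα1 : α < 1) (hβ : 0 < β) (ht : 0 < t)
    (μ : ℝ) :
    caputoDeriv α (fun s => s ^ β * mlF α (β + 1) (-μ * s ^ α)) t +
        μ * (t ^ β * mlF α (β + 1) (-μ * t ^ α)) =
      t ^ (β - α) * mittagLeffler α (β - α + 1) (-μ * t ^ α) := by
  have hrpow : t ^ β = t ^ (β - α) * t ^ α := by rw [← Real.rpow_add ht, sub_add_cancel]
  rw [caputoDeriv_rpow_mul_mlF hα0 hα1 hβ ht, mlF_eq_mittagLeffler_add hα0, hrpow,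
    show α + (β - α + 1) = β + 1 by ring]
  ring

end FractionalODE

/-- For `0 < α < 1` and `μ ∈ ℝ`:
(i) `φ(t) = t^α F_{α,α+1}(-μ t^α)` satisfies `(D^α φ)(t) + μ φ(t) = E_{α,1}(-μ t^α)`;
(ii) `ψ(t) = t^{2α} F_{α,2α+1}(-μ t^α)` satisfies `(D^α ψ)(t) + μ ψ(t) = t^α E_{α,α+1}(-μ t^α)`,
for every `t > 0`, where `D^α` is the Caputo derivative of order `α`. -/
theorem caputo_ode_for_mlF (α μ : ℝ) (hα0 : 0 < α) (hα1 : α < 1)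
    (φ ψ : ℝ → ℝ)
    (hφ : ∀ t : ℝ, φ t = t ^ α * mlF α (α + 1) (-μ * t ^ α))
    (hψ : ∀ t : ℝ, ψ t = t ^ (2 * α) * mlF α (2 * α + 1) (-μ * t ^ α)) :
    ∀ t : ℝ, 0 < t →
      ((1 / Real.Gamma (1 - α)) * (∫ z in (0:ℝ)..t, deriv φ z * (t - z) ^ (-α)) + μ * φ t
          = mittagLeffler α 1 (-μ * t ^ α)) ∧
      ((1 / Real.Gamma (1 - α)) * (∫ z in (0:ℝ)..t, deriv ψ z * (t - z) ^ (-α)) + μ * ψ t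
          = t ^ α * mittagLeffler α (α + 1) (-μ * t ^ α)) := by
  obtain rfl := funext hφ
  obtain rfl := funext hψ
  intro t ht
  have general {β : ℝ} (hβ : 0 < β) := caputo_ode_for_mlF_general hα0 hα1 hβ ht μ
  exact ⟨by simpa [caputoDeriv] using general hα0,
    by simpa [caputoDeriv, two_mul] using general (mul_pos two_pos hα0)⟩
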